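/- Let W, L be independent bounded nonnegative random variables with L ≤ ℓ_max almost surely. For κ ≥ 0, define I(κ) = E[A_{κ,d}(W,L)]. Then I(κ) ≥ I(ℓ_max) for all κ ≥ 0, and I(κ) = I(ℓ_max) for all κ ≥ ℓ_max. -/

import Mathlib

open MeasureTheory ProbabilityTheory

noncomputable def A (κ d w ℓ : ℝ) : ℝ :=
  if d ≤ w then (w + d) * ℓ
  else if ℓ < κ then 2 * w * ℓ
  else (ℓ - κ) * (d - w) + 2 * w * ℓ

/-!
Pointwise, `A κ d w ℓ` exceeds `(w + min w d) * ℓ` by `max (ℓ - κ) 0 * max (d - w) 0`, which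
vanishes once `ℓ ≤ κ`. So only integrability is at stake: a non-integrable function has integral
`0`, and neither `W` nor `L` comes with any measurability. If `∫ (W + min W d) * L ≠ 0`, then
independence, read in terms of outer measures, forces `W` and `L` to be a.e.-measurable: when
`F (U, V)` is a.e.-measurable and `F` is strictly increasing in `U`, then on an event where `V` is
almost constant a level set of `F (U, V)` separates `{U ≤ a}` from `{b ≤ U}`, and by independence
`{U ≤ a}` and `{b ≤ U}` then have additive outer measures on the whole space.
-/

open Set Filter Topology

section OuterMeasureSeparation

variable {Ω α β γ : Type*} [MeasurableSpace Ω] {μ : Measure Ω} [IsFiniteMeasure μ]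

theorem nullMeasurableSet_of_measure_add_measure_compl_le {s : Set Ω}
    (h : μ s + μ sᶜ ≤ μ univ) : NullMeasurableSet s μ := by
  have hm : MeasurableSet (toMeasurable μ sᶜ)ᶜ := (measurableSet_toMeasurable _ _).compl
  have hsub : (toMeasurable μ sᶜ)ᶜ ⊆ s := compl_subset_comm.1 (subset_toMeasurable _ _)
  have hle : μ s ≤ μ (toMeasurable μ sᶜ)ᶜ := by
    rw [measure_compl (measurableSet_toMeasurable _ _) (measure_ne_top _ _), measure_toMeasurable]
    exact ENNReal.le_sub_of_add_le_right (measure_ne_top _ _) h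
  exact hm.nullMeasurableSet.congr
    (ae_eq_of_subset_of_measure_ge hsub hle hm.nullMeasurableSet (measure_ne_top _ _))

variable [MeasurableSpace α] [MeasurableSpace β] {U : Ω → α} {V : Ω → β}

theorem measure_preimage_add_le_of_indepFun_of_separated (hUV : IndepFun U V μ)
    {s t : Set α} (hs : MeasurableSet s) (ht : MeasurableSet t)
    {T : Set β} (hT : MeasurableSet T) (hT0 : μ (V ⁻¹' T) ≠ 0)
    {G : Set Ω} (hG : NullMeasurableSet G μ)
    (hsG : U ⁻¹' s ∩ V ⁻¹' T ⊆ G) (htG : Disjoint (U ⁻¹' t ∩ V ⁻¹' T) G) :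
    μ (U ⁻¹' s) + μ (U ⁻¹' t) ≤ μ univ := by
  have hindep := indepFun_iff_measure_inter_preimage_eq_mul.1 hUV
  have hadd : μ (U ⁻¹' s ∩ V ⁻¹' T) + μ (U ⁻¹' t ∩ V ⁻¹' T) ≤ μ (U ⁻¹' (s ∪ t) ∩ V ⁻¹' T) := by
    rw [← measure_inter_add_sdiff₀ (U ⁻¹' (s ∪ t) ∩ V ⁻¹' T) hG]
    refine add_le_add (measure_mono ?_) (measure_mono ?_)
    · exact subset_inter (inter_subset_inter_left _ (preimage_mono subset_union_left)) hsG
    · exact subset_sdiff.2 ⟨inter_subset_inter_left _ (preimage_mono subset_union_right), htG⟩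
  rw [hindep s T hs hT, hindep t T ht hT, hindep _ T (hs.union ht) hT, ← add_mul] at hadd
  calc μ (U ⁻¹' s) + μ (U ⁻¹' t)
      ≤ μ (U ⁻¹' (s ∪ t)) := (ENNReal.mul_le_mul_iff_left hT0 (measure_ne_top _ _)).1 hadd
    _ ≤ μ univ := measure_mono (subset_univ _)

variable [LinearOrder α] [TopologicalSpace α] [OrderTopology α] [SecondCountableTopology α]
  [DenselyOrdered α] [NoMaxOrder α] [BorelSpace α]

theorem aemeasurable_of_measure_Iic_add_measure_Ici_le
    (h : ∀ a b, a < b → μ (U ⁻¹' Iic a) + μ (U ⁻¹' Ici b) ≤ μ univ) : AEMeasurable U μ := by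
  have hIic (a : α) : NullMeasurableSet (U ⁻¹' Iic a) μ := by
    refine nullMeasurableSet_of_measure_add_measure_compl_le ?_
    obtain ⟨b, hb_anti, hab, hb_lim⟩ := exists_seq_strictAnti_tendsto a
    have hcompl : (U ⁻¹' Iic a)ᶜ = ⋃ n, U ⁻¹' Ici (b n) := by
      ext ω
      simp only [mem_compl_iff, mem_preimage, mem_Iic, not_le, mem_iUnion, mem_Ici]
      exact ⟨fun hω ↦ (hb_lim.eventually_le_const hω).exists, fun ⟨n, hn⟩ ↦ (hab n).trans_le hn⟩
    have hmono : Monotone fun n ↦ U ⁻¹' Ici (b n) := fun m n hmn ↦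
      preimage_mono (Ici_subset_Ici.2 (hb_anti.antitone hmn))
    rw [hcompl, hmono.measure_iUnion, ENNReal.add_iSup]
    exact iSup_le fun n ↦ h a (b n) (hab n)
  have hU : NullMeasurable U μ := measurable_of_Iic (δ := NullMeasurableSpace Ω μ) hIic
  exact hU.aemeasurable

variable [TopologicalSpace β] [SecondCountableTopology β] [OpensMeasurableSpace β]
  [LinearOrder γ] [TopologicalSpace γ] [OrderClosedTopology γ] [DenselyOrdered γ]
  [MeasurableSpace γ] [OpensMeasurableSpace γ]

theorem aemeasurable_left_of_indepFun_of_strictMono {F : α → β → γ} {S : Set β}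
    (hUV : IndepFun U V μ) (hF : AEMeasurable (fun ω ↦ F (U ω) (V ω)) μ)
    (hS : MeasurableSet S) (hVS : μ (V ⁻¹' S) ≠ 0)
    (hF_mono : ∀ y ∈ S, StrictMono (F · y)) (hF_cont : ∀ x, ContinuousOn (F x) S) :
    AEMeasurable U μ := by
  refine aemeasurable_of_measure_Iic_add_measure_Ici_le fun a b hab ↦ ?_
  obtain ⟨c, hcS, hc⟩ : ∃ c ∈ S, ∀ T ∈ 𝓝[S] c, 0 < OuterMeasure.map V μ.toOuterMeasure T :=
    exists_mem_forall_mem_nhdsWithin_pos_measure hVS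
  obtain ⟨m, ham, hmb⟩ := exists_between (hF_mono c hcS hab)
  obtain ⟨N, hN, hcN, hNm⟩ : ∃ N, IsOpen N ∧ c ∈ N ∧ N ∩ S ⊆ {y | F a y < m ∧ m < F b y} :=
    mem_nhdsWithin.1 <| ((hF_cont a c hcS).eventually_lt_const ham).and
      ((hF_cont b c hcS).eventually_const_lt hmb)
  refine measure_preimage_add_le_of_indepFun_of_separated hUV measurableSet_Iic measurableSet_Ici
    (hN.measurableSet.inter hS) (hc _ (mem_nhdsWithin.2 ⟨N, hN, hcN, subset_rfl⟩)).ne'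
    (hF.nullMeasurable (measurableSet_Iio (a := m))) ?_ ?_
  · rintro ω ⟨hωa, hωV⟩
    exact ((hF_mono _ hωV.2).monotone hωa).trans_lt (hNm hωV).1
  · refine disjoint_left.2 fun ω ⟨hωb, hωV⟩ (hωm : F (U ω) (V ω) < m) ↦ ?_
    exact hωm.not_ge ((hNm hωV).2.le.trans ((hF_mono _ hωV.2).monotone hωb))

end OuterMeasureSeparation

theorem A_eq_add (κ d w ℓ : ℝ) :
    A κ d w ℓ = (w + min w d) * ℓ + max (ℓ - κ) 0 * max (d - w) 0 := by
  unfold A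
  split_ifs with hw hℓ
  · rw [min_eq_right hw, max_eq_right (sub_nonpos.2 hw)]; ring
  · rw [min_eq_left (not_le.1 hw).le, max_eq_right (sub_nonpos.2 hℓ.le)]; ring
  · rw [min_eq_left (not_le.1 hw).le, max_eq_left (sub_nonneg.2 (not_lt.1 hℓ)),
      max_eq_left (sub_nonneg.2 (not_le.1 hw).le)]
    ring

theorem A_eq_of_le {κ d w ℓ : ℝ} (h : ℓ ≤ κ) : A κ d w ℓ = (w + min w d) * ℓ := by
  rw [A_eq_add, max_eq_right (sub_nonpos.2 h), zero_mul, add_zero]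

section Expectation

variable {Ω : Type*} [MeasurableSpace Ω] {μ : Measure Ω} {W L : Ω → ℝ} {ℓmax d : ℝ}

theorem integral_A_eq_of_ae_le {κ : ℝ} (hL : ∀ᵐ ω ∂μ, L ω ≤ κ) :
    ∫ ω, A κ d (W ω) (L ω) ∂μ = ∫ ω, (W ω + min (W ω) d) * L ω ∂μ :=
  integral_congr_ae (hL.mono fun _ hω ↦ A_eq_of_le hω)

variable [IsFiniteMeasure μ]

theorem aemeasurable_of_integral_add_min_mul_ne_zero (hWL : IndepFun W L μ)
    (hW0 : 0 ≤ᵐ[μ] W) (hL0 : 0 ≤ᵐ[μ] L) (hd : 0 ≤ d)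
    (h : ∫ ω, (W ω + min (W ω) d) * L ω ∂μ ≠ 0) : AEMeasurable W μ ∧ AEMeasurable L μ := by
  have hmul : AEMeasurable (fun ω ↦ (W ω + min (W ω) d) * L ω) μ :=
    (Integrable.of_integral_ne_zero h).aemeasurable
  have hW_pos : μ (W ⁻¹' Ioi 0) ≠ 0 := fun hnull ↦ h <| integral_eq_zero_of_ae <| by
    filter_upwards [measure_eq_zero_iff_ae_notMem.1 hnull, hW0] with ω hω hω0
    have hWω : W ω = 0 := le_antisymm (not_lt.1 hω) hω0
    simp [hWω, hd]
  have hL_pos : μ (L ⁻¹' Ioi 0) ≠ 0 := fun hnull ↦ h <| integral_eq_zero_of_ae <| by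
    filter_upwards [measure_eq_zero_iff_ae_notMem.1 hnull, hL0] with ω hω hω0
    have hLω : L ω = 0 := le_antisymm (not_lt.1 hω) hω0
    simp [hLω]
  constructor
  · refine aemeasurable_left_of_indepFun_of_strictMono (F := fun w ℓ ↦ (w + min w d) * ℓ)
      hWL hmul measurableSet_Ioi hL_pos (fun ℓ (hℓ : 0 < ℓ) ↦ ?_) fun w ↦ by fun_prop
    have hmin : Monotone fun w ↦ min w d := monotone_id.min monotone_const
    exact (strictMono_id.add_monotone hmin).mul_const hℓ
  · refine aemeasurable_left_of_indepFun_of_strictMono (F := fun ℓ w ↦ (w + min w d) * ℓ)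
      hWL.symm hmul measurableSet_Ioi hW_pos (fun w (hw : 0 < w) ↦ ?_) fun ℓ ↦ by fun_prop
    exact strictMono_id.const_mul (add_pos_of_pos_of_nonneg hw (le_min hw.le hd))

theorem integrable_max_sub_mul_max_sub (hW : AEMeasurable W μ) (hL : AEMeasurable L μ)
    (hW0 : 0 ≤ᵐ[μ] W) (hLb : ∀ᵐ ω ∂μ, L ω ≤ ℓmax) (κ d : ℝ) :
    Integrable (fun ω ↦ max (L ω - κ) 0 * max (d - W ω) 0) μ := by
  refine Integrable.of_bound (by fun_prop) (max (ℓmax - κ) 0 * max d 0) ?_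
  filter_upwards [hW0, hLb] with ω hω0 hωb
  rw [Real.norm_of_nonneg (by positivity)]
  gcongr
  exact sub_le_self d hω0

theorem integral_add_min_mul_le_integral_A (hWL : IndepFun W L μ)
    (hW0 : 0 ≤ᵐ[μ] W) (hL0 : 0 ≤ᵐ[μ] L) (hLb : ∀ᵐ ω ∂μ, L ω ≤ ℓmax) (hd : 0 ≤ d) (κ : ℝ) :
    ∫ ω, (W ω + min (W ω) d) * L ω ∂μ ≤ ∫ ω, A κ d (W ω) (L ω) ∂μ := by
  simp only [A_eq_add]
  by_cases hzero : ∫ ω, (W ω + min (W ω) d) * L ω ∂μ = 0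
  · rw [hzero]
    refine integral_nonneg_of_ae ?_
    filter_upwards [hW0, hL0] with ω (hω : 0 ≤ W ω) (hω' : 0 ≤ L ω)
    exact add_nonneg (by positivity) (by positivity)
  · obtain ⟨hWm, hLm⟩ := aemeasurable_of_integral_add_min_mul_ne_zero hWL hW0 hL0 hd hzero
    rw [integral_add (.of_integral_ne_zero hzero)
      (integrable_max_sub_mul_max_sub hWm hLm hW0 hLb κ d), le_add_iff_nonneg_right]
    exact integral_nonneg fun ω ↦ by positivity

theorem I_maximized_at_ellmax_general (hWL : IndepFun W L μ)
    (hW0 : 0 ≤ᵐ[μ] W) (hL0 : 0 ≤ᵐ[μ] L) (hLb : ∀ᵐ ω ∂μ, L ω ≤ ℓmax) (hd : 0 ≤ d)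
    (I : ℝ → ℝ) (hI : ∀ κ, I κ = ∫ ω, A κ d (W ω) (L ω) ∂μ) :
    (∀ κ, I ℓmax ≤ I κ) ∧ (∀ κ, ℓmax ≤ κ → I κ = I ℓmax) := by
  have hconst (κ : ℝ) (hκ : ℓmax ≤ κ) : I κ = ∫ ω, (W ω + min (W ω) d) * L ω ∂μ :=
    (hI κ).trans (integral_A_eq_of_ae_le (hLb.mono fun _ hω ↦ hω.trans hκ))
  refine ⟨fun κ ↦ ?_, fun κ hκ ↦ (hconst κ hκ).trans (hconst ℓmax le_rfl).symm⟩
  rw [hconst ℓmax le_rfl, hI κ]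
  exact integral_add_min_mul_le_integral_A hWL hW0 hL0 hLb hd κ

end Expectation

theorem I_maximized_at_ellmax
    {Ω : Type*} [MeasureSpace Ω] [IsProbabilityMeasure (volume : Measure Ω)]
    (W L : Ω → ℝ) (hWL : IndepFun W L)
    (hW0 : ∀ ω, 0 ≤ W ω) (hL0 : ∀ ω, 0 ≤ L ω)
    (Wmax ℓmax : ℝ) (hWb : ∀ ω, W ω ≤ Wmax) (hLb : ∀ᵐ ω, L ω ≤ ℓmax)
    (d : ℝ) (hd : 0 < d)
    (I : ℝ → ℝ) (hI : ∀ κ, I κ = ∫ ω, A κ d (W ω) (L ω)) :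
    (∀ κ, 0 ≤ κ → I ℓmax ≤ I κ) ∧ (∀ κ, ℓmax ≤ κ → I κ = I ℓmax) :=
  have h := I_maximized_at_ellmax_general hWL (ae_of_all _ hW0) (ae_of_all _ hL0) hLb hd.le I hI
  ⟨fun κ _ ↦ h.1 κ, h.2⟩
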